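/- arXiv:1707.02002 — 2 statements merged into one kernel-verified Lean document; each statement's English description precedes it below -/
import Mathlib

section
/- Let T be a tree on n vertices. Then (n−1)² ≤ W(T) ≤ (n³−n)/6, where W(T) = Σ_{{x,y}⊆V(T)} d(x,y) is the Wiener index. The lower bound is attained if and only if T is the star S_n, and the upper bound is attained if and only if T is the path P_n. -/
open SimpleGraph Finset

attribute [local instance] Classical.propDecidable

variable {V : Type*}

/-- Degree of a vertex as a real number. -/
noncomputable def degR [Fintype V] (G : SimpleGraph V) (x : V) : ℝ :=
  ((Finset.univ.filter fun y => G.Adj x y).card : ℝ)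

/-- Number of edges of a graph. -/
noncomputable def esize (G : SimpleGraph V) : ℕ := Nat.card G.edgeSet

/-- Dirichlet energy of a potential. -/
noncomputable def energyFn [Fintype V] (G : SimpleGraph V) (φ : V → ℝ) : ℝ :=
  (1/2) * ∑ u, ∑ v, if G.Adj u v then (φ u - φ v)^2 else 0

/-- Effective resistance between two vertices (unit resistors on edges),
via the Dirichlet variational principle: the reciprocal of the minimal energy
of a potential with value 1 at `x` and 0 at `y`. -/
noncomputable def eres [Fintype V] (G : SimpleGraph V) (x y : V) : ℝ :=
  (sInf {e : ℝ | ∃ φ : V → ℝ, φ x = 1 ∧ φ y = 0 ∧ e = energyFn G φ})⁻¹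

/-- The transition matrix of the simple random walk, killed at `y`. -/
noncomputable def hitMat [Fintype V] (G : SimpleGraph V) (y : V) : Matrix V V ℝ :=
  Matrix.of fun u v => if v = y then 0 else if G.Adj u v then (degR G u)⁻¹ else 0

/-- Expected hitting time `H_{xy}` of the simple random walk from `x` to `y`,
expressed as the sum of the survival probabilities of the walk killed at `y`. -/
noncomputable def hitting [Fintype V] (G : SimpleGraph V) (x y : V) : ℝ :=
  if x = y then 0 else ∑' k : ℕ, ∑ z, (hitMat G y ^ k) x z

/-- Resistance-centrality `R(x)`. -/
noncomputable def Rres [Fintype V] (G : SimpleGraph V) (x : V) : ℝ := ∑ y, eres G x y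

/-- Weighted resistance-centrality `R^w(x)`. -/
noncomputable def Rw [Fintype V] (G : SimpleGraph V) (x : V) : ℝ :=
  ∑ y, degR G y * eres G x y

/-- Kirchhoff index `Kf(G)`. -/
noncomputable def Kf [Fintype V] (G : SimpleGraph V) : ℝ :=
  (1/2) * ∑ x, ∑ y, eres G x y

/-- Additive degree-Kirchhoff index `Kf⁺(G)`. -/
noncomputable def KfPlus [Fintype V] (G : SimpleGraph V) : ℝ :=
  (1/2) * ∑ x, ∑ y, (degR G x + degR G y) * eres G x y

/-- Multiplicative degree-Kirchhoff index `Kf*(G)`. -/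
noncomputable def KfStar [Fintype V] (G : SimpleGraph V) : ℝ :=
  (1/2) * ∑ x, ∑ y, degR G x * degR G y * eres G x y

/-- Cover cost `CC(x) = Σ_y H_{xy}`. -/
noncomputable def coverCost [Fintype V] (G : SimpleGraph V) (x : V) : ℝ :=
  ∑ y, hitting G x y

/-- Reverse cover cost `RC(x) = Σ_y H_{yx}`. -/
noncomputable def reverseCoverCost [Fintype V] (G : SimpleGraph V) (x : V) : ℝ :=
  ∑ y, hitting G y x

/-- Centrality (transmission) `D(x) = Σ_y d(x,y)`. -/
noncomputable def Dcent [Fintype V] (G : SimpleGraph V) (x : V) : ℝ :=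
  ∑ y, (G.dist x y : ℝ)

/-- Weighted centrality `D^w(x) = Σ_y deg(y)·d(x,y)`. -/
noncomputable def Dw [Fintype V] (G : SimpleGraph V) (x : V) : ℝ :=
  ∑ y, degR G y * (G.dist x y : ℝ)

/-- Wiener index `W(G)`. -/
noncomputable def Wiener [Fintype V] (G : SimpleGraph V) : ℝ :=
  (1/2) * ∑ x, ∑ y, (G.dist x y : ℝ)

/-- `D_{T}(v)`: sum of distances from `v` to the vertices of its connected
component in `G'` (used for the branch trees of a unicyclic graph). -/
noncomputable def branchD [Fintype V] (G' : SimpleGraph V) (v : V) : ℝ :=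
  ∑ u, if G'.Reachable v u then (G'.dist v u : ℝ) else 0

/-- The set of edges of the cycle `c 0 - c 1 - ⋯ - c (l-1) - c 0`. -/
def cycleEdges {l : ℕ} [NeZero l] (c : Fin l → V) : Set (Sym2 V) :=
  Set.range fun i : Fin l => s(c i, c (i + 1))

/-- Distance from a vertex to a set of vertices. -/
noncomputable def distToSet [Fintype V] (G : SimpleGraph V) (x : V) (s : Set V) : ℕ :=
  sInf {d | ∃ y ∈ s, G.dist x y = d}

/-- `v` is the center of a star. -/
def IsStarCenter (G : SimpleGraph V) (v : V) : Prop := ∀ u, u ≠ v → G.Adj v u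

/-- `G` is a star. -/
def IsStar (G : SimpleGraph V) : Prop := ∃ v, IsStarCenter G v

/-- The lollipop graph `P_n^l` : a cycle `C_l` on `0,…,l-1` together with a
path on `l,…,n-1` attached at the cycle vertex `0`. -/
def lollipop (n l : ℕ) : SimpleGraph (Fin n) :=
  SimpleGraph.fromRel (fun a b =>
    (a.val + 1 = b.val ∧ b.val < l) ∨ (a.val = 0 ∧ b.val = l - 1) ∨
    (a.val = 0 ∧ b.val = l) ∨ (l ≤ a.val ∧ a.val + 1 = b.val))

/-- The graph `S_n^l` : a cycle `C_l` on `0,…,l-1` with `n - l` pendant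
vertices `l,…,n-1` attached at the cycle vertex `0`. -/
def starCycle (n l : ℕ) : SimpleGraph (Fin n) :=
  SimpleGraph.fromRel (fun a b =>
    (a.val + 1 = b.val ∧ b.val < l) ∨ (a.val = 0 ∧ b.val = l - 1) ∨
    (a.val = 0 ∧ l ≤ b.val))

/-- The cycle graph `C_n` on `Fin n`. -/
def cycleG (n : ℕ) : SimpleGraph (Fin n) :=
  SimpleGraph.fromRel (fun a b => a.val + 1 = b.val ∨ (a.val = 0 ∧ b.val = n - 1))

/-!
Lower bound: a connected graph with `m` edges has `m` pairs of vertices at distance `1` and all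
other pairs at distance at least `2`, so `n (n - 1) - m ≤ W`, with equality iff all distances are
at most `2`. For a tree `m = n - 1`, and the neighbour of a leaf is then a center of the star.

Upper bound: note `(n³ - n) / 6 = C(n + 1, 3)`. Deleting a non-cut vertex `v` of a connected graph
shortens no distance between the other vertices, and the distances from `v` take every value
between `0` and the largest one, so `D(v) ≤ 0 + 1 + ⋯ + (n - 1) = C(n, 2)`; Pascal's rule
`C(n, 2) + C(n, 3) = C(n + 1, 3)` closes the induction. Equality makes the distances from `v`
pairwise distinct, and ordering the vertices by them exhibits the graph as a path.
-/

section LowerSetImage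

variable {α : Type*} {f : α → ℕ} {s : Finset α} {a : α}

theorem range_add_one_subset_image_of_isLowerSet (hf : IsLowerSet (f '' s)) (ha : a ∈ s) :
    range (f a + 1) ⊆ s.image f := by
  intro k hk
  have hka : k ≤ f a := Nat.lt_succ_iff.mp (mem_range.mp hk)
  simpa using hf hka (Set.mem_image_of_mem f ha)

theorem lt_card_of_isLowerSet_image (hf : IsLowerSet (f '' s)) (ha : a ∈ s) : f a < #s :=
  calc
    f a < #(range (f a + 1)) := by simp
    _ ≤ #(s.image f) := card_le_card (range_add_one_subset_image_of_isLowerSet hf ha)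
    _ ≤ #s := card_image_le

theorem isLowerSet_image_of_insert (hf : IsLowerSet (f '' (insert a s : Finset α)))
    (hmax : ∀ x ∈ s, f x ≤ f a) : IsLowerSet (f '' s) := by
  rintro _ k hk ⟨x, hx, rfl⟩
  obtain ⟨y, hy, rfl⟩ := hf hk ⟨x, by simp [mem_coe.mp hx], rfl⟩
  rcases mem_insert.mp (mem_coe.mp hy) with rfl | hy
  · exact ⟨x, hx, (hmax x hx).antisymm hk⟩
  · exact ⟨y, hy, rfl⟩

theorem apply_le_card_of_isLowerSet_image_insert
    (hf : IsLowerSet (f '' (insert a s : Finset α))) (has : a ∉ s) : f a ≤ #s := by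
  simpa [card_insert_of_notMem has, Nat.lt_succ_iff] using
    lt_card_of_isLowerSet_image hf (mem_insert_self a s)

theorem sum_le_choose_two_of_isLowerSet_image (hf : IsLowerSet (f '' s)) :
    ∑ x ∈ s, f x ≤ (#s).choose 2 := by
  induction s using induction_on_max_value f with
  | empty => simp
  | insert a s has hmax ih =>
    rw [sum_insert has, card_insert_of_notMem has, Nat.choose_succ_succ', Nat.choose_one_right]
    exact add_le_add (apply_le_card_of_isLowerSet_image_insert hf has)
      (ih (isLowerSet_image_of_insert hf hmax))

theorem injOn_of_sum_eq_choose_two (hf : IsLowerSet (f '' s))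
    (hsum : ∑ x ∈ s, f x = (#s).choose 2) : Set.InjOn f s := by
  induction s using induction_on_max_value f with
  | empty => simp
  | insert a s has hmax ih =>
    rw [sum_insert has, card_insert_of_notMem has, Nat.choose_succ_succ',
      Nat.choose_one_right] at hsum
    have hs := isLowerSet_image_of_insert hf hmax
    have hle_sum := sum_le_choose_two_of_isLowerSet_image hs
    have hle := apply_le_card_of_isLowerSet_image_insert hf has
    have hfa : f a = #s := by lia
    rw [coe_insert, Set.injOn_insert (mod_cast has)]
    refine ⟨ih hs (by lia), ?_⟩
    rintro ⟨x, hx, hxa⟩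
    exact (lt_card_of_isLowerSet_image hs hx).ne (hxa.trans hfa)

end LowerSetImage

section Distance

variable {W : Type*} {G : SimpleGraph V} {H : SimpleGraph W}

theorem exists_adj_dist_eq_of_dist_eq_succ {u v : V} {k : ℕ} (h : G.dist u v = k + 1) :
    ∃ w, G.Adj w v ∧ G.dist u w = k := by
  have hreach : G.Reachable u v := .of_dist_ne_zero (by lia)
  rw [SimpleGraph.dist_comm] at h
  obtain ⟨p, hp⟩ := hreach.symm.exists_walk_length_eq_dist
  cases p with
  | nil => simp at h
  | @cons _ w _ hvw q =>
    refine ⟨w, hvw.symm, ?_⟩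
    have hle : G.dist w u ≤ q.length := dist_le q
    have htri := hvw.reachable.dist_triangle_left u
    rw [dist_eq_one_iff_adj.mpr hvw] at htri
    rw [Walk.length_cons] at hp
    rw [SimpleGraph.dist_comm]
    lia

theorem isLowerSet_range_dist (G : SimpleGraph V) (v : V) : IsLowerSet (Set.range (G.dist v)) := by
  suffices ∀ j k u, G.dist v u = k + j → k ∈ Set.range (G.dist v) by
    rintro _ k hk ⟨u, rfl⟩
    exact this (G.dist v u - k) k u (by lia)
  intro j k
  induction j with
  | zero => exact fun u hu => ⟨u, hu⟩
  | succ j ih =>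
    intro u hu
    obtain ⟨w, -, hw⟩ := exists_adj_dist_eq_of_dist_eq_succ hu
    exact ih w hw

theorem adj_of_dist_add_one_eq {v a b : V}
    (hinj : Function.Injective (G.dist v)) (h : G.dist v a + 1 = G.dist v b) : G.Adj a b := by
  obtain ⟨w, hwb, hw⟩ := exists_adj_dist_eq_of_dist_eq_succ h.symm
  rwa [hinj hw] at hwb

theorem adj_iff_of_injective_dist {v a b : V} (hinj : Function.Injective (G.dist v)) :
    G.Adj a b ↔ G.dist v a + 1 = G.dist v b ∨ G.dist v b + 1 = G.dist v a := by
  constructor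
  · intro hab
    have hne : G.dist v a ≠ G.dist v b := hinj.ne hab.ne
    have hdiff := hab.diff_dist_adj (u := v)
    lia
  · rintro (h | h)
    · exact adj_of_dist_add_one_eq hinj h
    · exact (adj_of_dist_add_one_eq hinj h).symm

theorem dist_map_le_of_reachable (f : G →g H) {u v : V} (h : G.Reachable u v) :
    H.dist (f u) (f v) ≤ G.dist u v := by
  obtain ⟨p, hp⟩ := h.exists_walk_length_eq_dist
  simpa [← hp] using dist_le (p.map f)

theorem dist_iso_apply (e : G ≃g H) (u v : V) : H.dist (e u) (e v) = G.dist u v := by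
  by_cases h : G.Reachable u v
  · refine (dist_map_le_of_reachable e.toHom h).antisymm ?_
    simpa using dist_map_le_of_reachable e.symm.toHom (e.reachable_iff.mpr h)
  · rw [dist_eq_zero_of_not_reachable h,
      dist_eq_zero_of_not_reachable (mt e.reachable_iff.mp h)]

theorem natDist_le_length_of_walk_pathGraph {n : ℕ} {i j : Fin n} (p : (pathGraph n).Walk i j) :
    Nat.dist i j ≤ p.length := by
  induction p with
  | nil => simp
  | cons h p ih =>
    rw [pathGraph_adj] at h
    simp only [Nat.dist, Walk.length_cons] at ih ⊢
    lia

theorem dist_pathGraph_le {n k : ℕ} {i j : Fin n} (h : i.val + k = j.val) :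
    (pathGraph n).dist i j ≤ k := by
  induction k generalizing i with
  | zero => simp [Fin.ext h]
  | succ k ih =>
    let i' : Fin n := ⟨i + 1, by lia⟩
    have hadj : (pathGraph n).Adj i i' := pathGraph_adj.mpr (.inl rfl)
    calc
      (pathGraph n).dist i j ≤ (pathGraph n).dist i i' + (pathGraph n).dist i' j :=
        hadj.reachable.dist_triangle_left j
      _ ≤ 1 + k := by
        rw [dist_eq_one_iff_adj.mpr hadj]
        exact Nat.add_le_add_left (ih (by simp only [i']; lia)) 1
      _ = k + 1 := add_comm 1 k

theorem dist_pathGraph {n : ℕ} (i j : Fin n) : (pathGraph n).dist i j = Nat.dist i j := by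
  refine le_antisymm ?_ ?_
  · rcases le_total i j with hij | hij
    · exact dist_pathGraph_le (by simp only [Nat.dist]; lia)
    · rw [SimpleGraph.dist_comm]
      exact dist_pathGraph_le (by simp only [Nat.dist]; lia)
  · obtain ⟨p, hp⟩ := (pathGraph_preconnected n i j).exists_walk_length_eq_dist
    exact hp ▸ natDist_le_length_of_walk_pathGraph p

end Distance

section Transmission

variable [Fintype V] {G : SimpleGraph V} {v : V}

theorem isLowerSet_image_univ_dist (G : SimpleGraph V) (v : V) :
    IsLowerSet (G.dist v '' (univ : Finset V)) := by
  simpa using isLowerSet_range_dist G v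

theorem dcent_le_choose_two (G : SimpleGraph V) (v : V) :
    Dcent G v ≤ (Fintype.card V).choose 2 := by
  unfold Dcent
  exact_mod_cast sum_le_choose_two_of_isLowerSet_image (isLowerSet_image_univ_dist G v)

theorem injective_dist_of_dcent_eq (h : Dcent G v = (Fintype.card V).choose 2) :
    Function.Injective (G.dist v) := by
  unfold Dcent at h
  simpa using
    injOn_of_sum_eq_choose_two (isLowerSet_image_univ_dist G v) (by exact_mod_cast h)

theorem nonempty_pathGraph_iso_of_injective_dist (hinj : Function.Injective (G.dist v)) :
    Nonempty (pathGraph (Fintype.card V) ≃g G) := by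
  let f (u : V) : Fin (Fintype.card V) :=
    ⟨G.dist v u, lt_card_of_isLowerSet_image (isLowerSet_image_univ_dist G v) (mem_univ u)⟩
  have hf : Function.Bijective f :=
    (Fintype.bijective_iff_injective_and_card f).mpr
      ⟨fun a b hab => hinj (congrArg Fin.val hab), by simp⟩
  have hadj (a b : V) : (pathGraph _).Adj (f a) (f b) ↔ G.Adj a b :=
    pathGraph_adj.trans (adj_iff_of_injective_dist hinj).symm
  exact ⟨SimpleGraph.Iso.symm ⟨Equiv.ofBijective f hf, hadj _ _⟩⟩

end Transmission

section UpperBound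

theorem wiener_congr {W : Type*} [Fintype V] [Fintype W] {G : SimpleGraph V} {H : SimpleGraph W}
    (e : G ≃g H) : Wiener G = Wiener H := by
  unfold Wiener
  congr 1
  refine Fintype.sum_equiv e.toEquiv _ _ fun x => Fintype.sum_equiv e.toEquiv _ _ fun y => ?_
  exact_mod_cast (dist_iso_apply e x y).symm

theorem sum_range_natDist (n : ℕ) : ∑ i ∈ range n, Nat.dist i n = (n + 1).choose 2 := by
  induction n with
  | zero => simp
  | succ n ih =>
    simp only [sum_range_succ', Nat.dist_succ_succ, ih, Nat.dist_zero_left,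
      Nat.choose_succ_succ' (n + 1), Nat.choose_one_right]
    exact add_comm _ _

theorem sum_range_sum_range_natDist (n : ℕ) :
    ∑ i ∈ range n, ∑ j ∈ range n, Nat.dist i j = 2 * (n + 1).choose 3 := by
  induction n with
  | zero => rfl
  | succ n ih =>
    simp only [sum_range_succ, sum_add_distrib, ih, Nat.dist_comm n, Nat.dist_self,
      sum_range_natDist, Nat.choose_succ_succ' (n + 1) 2]
    ring

theorem wiener_pathGraph (n : ℕ) : Wiener (pathGraph n) = (n + 1).choose 3 := by
  have hsum : ∑ i : Fin n, ∑ j : Fin n, (pathGraph n).dist i j = 2 * (n + 1).choose 3 := by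
    simp only [dist_pathGraph, ← sum_range_sum_range_natDist, sum_range]
  have hsum' : ∑ i : Fin n, ∑ j : Fin n, ((pathGraph n).dist i j : ℝ) = 2 * (n + 1).choose 3 := by
    exact_mod_cast hsum
  rw [Wiener, hsum']
  ring

variable [Fintype V] {G : SimpleGraph V} {v : V}

theorem card_compl_singleton_add_one (v : V) :
    Fintype.card ({v}ᶜ : Set V) + 1 = Fintype.card V := by
  have hpos : 0 < Fintype.card V := Fintype.card_pos_iff.mpr ⟨v⟩
  rw [Fintype.card_compl_set, Set.card_singleton, Nat.sub_add_cancel hpos]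

theorem wiener_le_dcent_add_wiener_induce (hv : (G.induce {v}ᶜ).Preconnected) :
    Wiener G ≤ Dcent G v + Wiener (G.induce {v}ᶜ) := by
  have hsplit (f : V → ℝ) : ∑ x, f x = f v + ∑ x : ({v}ᶜ : Set V), f x :=
    Fintype.sum_eq_add_sum_subtype_ne f v
  have hdcent : Dcent G v = ∑ x : ({v}ᶜ : Set V), (G.dist x v : ℝ) := by
    simp [Dcent, hsplit, SimpleGraph.dist_comm]
  have hrest : ∑ x : ({v}ᶜ : Set V), ∑ y : ({v}ᶜ : Set V), (G.dist x y : ℝ) ≤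
      ∑ x, ∑ y, ((G.induce {v}ᶜ).dist x y : ℝ) := by
    gcongr with x _ y _
    exact dist_map_le_of_reachable (Embedding.induce _).toHom (hv x y)
  calc
    Wiener G = 1 / 2 * (Dcent G v + (∑ x : ({v}ᶜ : Set V), (G.dist x v : ℝ) +
        ∑ x : ({v}ᶜ : Set V), ∑ y : ({v}ᶜ : Set V), (G.dist x y : ℝ))) := by
      rw [Wiener, hsplit, ← sum_add_distrib]
      simp only [hsplit (fun y => (G.dist _ y : ℝ)), Dcent]
    _ ≤ Dcent G v + Wiener (G.induce {v}ᶜ) := by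
      rw [← hdcent, Wiener]
      linarith

theorem wiener_le_choose_three (hG : G.Connected) :
    Wiener G ≤ (Fintype.card V + 1).choose 3 := by
  induction hn : Fintype.card V generalizing V with
  | zero => exact absurd hn (have := hG.nonempty; Fintype.card_ne_zero)
  | succ n ih =>
    rcases subsingleton_or_nontrivial V with hV | hV
    · have hdist (x y : V) : G.dist x y = 0 := by rw [Subsingleton.elim x y, dist_self]
      simp [Wiener, hdist]
    · obtain ⟨v, hv⟩ := hG.exists_connected_induce_compl_singleton_of_finite_nontrivial
      have hcard : Fintype.card ({v}ᶜ : Set V) = n :=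
        Nat.succ_injective ((card_compl_singleton_add_one v).trans hn)
      calc
        Wiener G ≤ Dcent G v + Wiener (G.induce {v}ᶜ) :=
          wiener_le_dcent_add_wiener_induce hv.preconnected
        _ ≤ (n + 1).choose 2 + (n + 1).choose 3 :=
          add_le_add (hn ▸ dcent_le_choose_two G v) (ih hv hcard)
        _ = (n + 1 + 1).choose 3 := by exact_mod_cast (Nat.choose_succ_succ' (n + 1) 2).symm

theorem exists_injective_dist_of_wiener_eq (hG : G.Connected)
    (h : Wiener G = (Fintype.card V + 1).choose 3) : ∃ v, Function.Injective (G.dist v) := by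
  rcases subsingleton_or_nontrivial V with hV | hV
  · obtain ⟨v⟩ := hG.nonempty
    exact ⟨v, Function.injective_of_subsingleton _⟩
  · obtain ⟨v, hv⟩ := hG.exists_connected_induce_compl_singleton_of_finite_nontrivial
    refine ⟨v, injective_dist_of_dcent_eq ((dcent_le_choose_two G v).antisymm ?_)⟩
    have hsplit := wiener_le_dcent_add_wiener_induce hv.preconnected
    have hrest := wiener_le_choose_three hv
    rw [h, Nat.choose_succ_succ', Nat.cast_add] at hsplit
    rw [card_compl_singleton_add_one] at hrest
    linarith

theorem wiener_eq_choose_three_iff (hG : G.Connected) :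
    Wiener G = (Fintype.card V + 1).choose 3 ↔
      Nonempty (pathGraph (Fintype.card V) ≃g G) := by
  constructor
  · intro h
    obtain ⟨v, hinj⟩ := exists_injective_dist_of_wiener_eq hG h
    exact nonempty_pathGraph_iso_of_injective_dist hinj
  · rintro ⟨e⟩
    rw [← wiener_congr e, wiener_pathGraph]

theorem cast_succ_choose_three (n : ℕ) : ((n + 1).choose 3 : ℝ) = ((n : ℝ) ^ 3 - n) / 6 := by
  induction n with
  | zero => simp [Nat.choose_eq_zero_of_lt]
  | succ n ih =>
    rw [Nat.choose_succ_succ', Nat.cast_add, ih, Nat.cast_choose_two]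
    push_cast
    ring

end UpperBound

section LowerBound

theorem min_dist_two_add_ite {G : SimpleGraph V} (hG : G.Connected) (x y : V) :
    min (G.dist x y) 2 + (if G.Adj x y then 1 else 0) + (if x = y then 2 else 0) = 2 := by
  rcases eq_or_ne x y with rfl | hne
  · simp
  by_cases hadj : G.Adj x y
  · simp [hne, hadj, dist_eq_one_iff_adj.mpr hadj]
  · have := hG.one_lt_dist_of_ne_of_not_adj hne hadj
    simp only [hne, hadj, if_false]
    lia

variable [Fintype V] {G : SimpleGraph V}

theorem sum_min_dist_two (hG : G.Connected) (x : V) :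
    ∑ y, ((min (G.dist x y) 2 : ℕ) : ℝ) = 2 * Fintype.card V - 2 - degR G x := by
  have h : ∑ y, (min (G.dist x y) 2 + (if G.Adj x y then 1 else 0) + (if x = y then 2 else 0)) =
      ∑ _y : V, 2 := sum_congr rfl fun y _ => min_dist_two_add_ite hG x y
  simp only [sum_add_distrib, sum_boole, sum_ite_eq, mem_univ, if_true, sum_const, card_univ,
    smul_eq_mul] at h
  have h' := congrArg (Nat.cast (R := ℝ)) h
  push_cast at h' ⊢
  rw [degR]
  linarith

theorem sum_degR_eq_two_mul_esize (G : SimpleGraph V) : ∑ x, degR G x = 2 * esize G := by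
  have hdeg (x : V) : degR G x = G.degree x := by
    rw [degR, ← card_neighborFinset_eq_degree, neighborFinset_eq_filter]
  have hsize : esize G = #G.edgeFinset := by
    rw [esize, Nat.card_eq_fintype_card, edgeFinset_card]
  simp only [hdeg, hsize]
  exact_mod_cast G.sum_degrees_eq_twice_card_edges

theorem half_mul_sum_sum_min_dist_two (hG : G.Connected) :
    1 / 2 * ∑ x, ∑ y, ((min (G.dist x y) 2 : ℕ) : ℝ) =
      Fintype.card V * (Fintype.card V - 1) - esize G := by
  simp only [sum_min_dist_two hG, sum_sub_distrib, sum_degR_eq_two_mul_esize, sum_const,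
    card_univ, nsmul_eq_mul]
  ring

theorem card_mul_sub_esize_le_wiener (hG : G.Connected) :
    Fintype.card V * (Fintype.card V - 1) - esize G ≤ Wiener G := by
  rw [← half_mul_sum_sum_min_dist_two hG, Wiener]
  gcongr
  exact min_le_left _ _

theorem wiener_eq_card_mul_sub_esize_iff (hG : G.Connected) :
    Wiener G = Fintype.card V * (Fintype.card V - 1) - esize G ↔ ∀ x y, G.dist x y ≤ 2 := by
  have hmin (x y : V) : ((min (G.dist x y) 2 : ℕ) : ℝ) ≤ G.dist x y := mod_cast min_le_left _ _
  rw [← half_mul_sum_sum_min_dist_two hG, Wiener, mul_right_inj' (by norm_num), eq_comm,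
    sum_eq_sum_iff_of_le fun x _ => sum_le_sum fun y _ => hmin x y]
  simp only [sum_eq_sum_iff_of_le fun y _ => hmin _ y, mem_univ, true_imp_iff, Nat.cast_inj,
    min_eq_left_iff]

end LowerBound

section Star

theorem dist_le_two_of_isStar {G : SimpleGraph V} (h : IsStar G) (x y : V) : G.dist x y ≤ 2 := by
  obtain ⟨c, hc⟩ := h
  have hcenter (z : V) : G.Reachable c z ∧ G.dist c z ≤ 1 := by
    rcases eq_or_ne z c with rfl | hz
    · simp
    · exact ⟨(hc z hz).reachable, (dist_eq_one_iff_adj.mpr (hc z hz)).le⟩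
  calc
    G.dist x y ≤ G.dist x c + G.dist c y := (hcenter x).1.symm.dist_triangle_left y
    _ ≤ 1 + 1 := add_le_add (SimpleGraph.dist_comm (G := G) ▸ (hcenter x).2) (hcenter y).2

variable {T : SimpleGraph V}

theorem isStar_of_dist_le_two [Finite V] (hT : T.IsTree) (h : ∀ x y, T.dist x y ≤ 2) :
    IsStar T := by
  have := Fintype.ofFinite V
  rcases subsingleton_or_nontrivial V with hV | hV
  · obtain ⟨v⟩ := hT.connected.nonempty
    exact ⟨v, fun u hu => absurd (Subsingleton.elim u v) hu⟩
  obtain ⟨l, hl⟩ := hT.exists_vert_degree_one_of_nontrivial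
  obtain ⟨c, hlc, hunique⟩ := degree_eq_one_iff_existsUnique_adj.mp hl
  refine ⟨c, fun u huc => ?_⟩
  rcases eq_or_ne l u with rfl | hlu
  · exact hlc.symm
  have hdist : T.dist l u = 1 + 1 :=
    (h l u).antisymm (hT.connected.one_lt_dist_of_ne_of_not_adj hlu (mt (hunique u) huc))
  obtain ⟨w, hwu, hlw⟩ := exists_adj_dist_eq_of_dist_eq_succ hdist
  rwa [hunique w (dist_eq_one_iff_adj.mp hlw)] at hwu

theorem isStar_iff_forall_dist_le_two [Finite V] (hT : T.IsTree) :
    IsStar T ↔ ∀ x y, T.dist x y ≤ 2 :=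
  ⟨dist_le_two_of_isStar, isStar_of_dist_le_two hT⟩

theorem card_mul_sub_esize_eq_sq_of_isTree [Fintype V] (hT : T.IsTree) :
    (Fintype.card V * (Fintype.card V - 1) - esize T : ℝ) = (Fintype.card V - 1) ^ 2 := by
  have hcard : esize T + 1 = Fintype.card V := by
    simpa [esize] using (isTree_iff_connected_and_card.mp hT).2
  rw [← hcard]
  push_cast
  ring

end Star

/-- For a tree `T` on `n` vertices,
`(n−1)² ≤ W(T) ≤ (n³−n)/6`, with equality on the left iff `T` is a star and
on the right iff `T` is a path. -/
theorem wiener_tree_bounds [Fintype V] (T : SimpleGraph V) (hT : T.IsTree)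
    (n : ℕ) (hn : Fintype.card V = n) :
    ((n : ℝ) - 1)^2 ≤ Wiener T ∧ Wiener T ≤ ((n : ℝ)^3 - n)/6 ∧
    (Wiener T = ((n : ℝ) - 1)^2 ↔ IsStar T) ∧
    (Wiener T = ((n : ℝ)^3 - n)/6 ↔ Nonempty (SimpleGraph.pathGraph n ≃g T)) := by
  subst hn
  rw [← cast_succ_choose_three, ← card_mul_sub_esize_eq_sq_of_isTree hT,
    isStar_iff_forall_dist_le_two hT]
  have hconn := hT.connected
  exact ⟨card_mul_sub_esize_le_wiener hconn, wiener_le_choose_three hconn,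
    wiener_eq_card_mul_sub_esize_iff hconn, wiener_eq_choose_three_iff hconn⟩
end

section
/- Let G = U(C_l; T_1,…,T_l) be an n-vertex unicyclic graph with unique cycle C_l = v_1v_2…v_lv_1, where T_i is the tree component of G − E(C_l) containing v_i. If x ∈ V(T_k), then R^w(x) = 2·R(x) + 2·d(x, v_k) − (n − l). -/
open SimpleGraph Finset

attribute [local instance] Classical.propDecidable

variable {V : Type*}

/-!
Orient the unicyclic graph by a map `p`: once around the cycle, and towards the cycle elsewhere.
Each vertex `u` then owns exactly one edge `{u, p u}`, so summing over edges gives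
`R^w(x) = ∑ u, (r(x,u) + r(x,p u))`, that is, `R^w(x) - 2 R(x) = ∑ u, (r(x,p u) - r(x,u))`.
The map `p` permutes the cycle, so the cycle contributes `0`. Off the cycle, `{u, p u}` is a bridge,
and crossing a bridge adds `1` to the resistance: the term is `1` if `u` lies on the path from `x`
to the cycle, which happens `d(x,v_k)` times, and `-1` for the other vertices among the `n - l`.

The bridge rule comes from unit potentials, the solutions of `L h = e_x - e_y`. These give
`r(x,y) = h x - h y` and add along `x, y, z`; the indicator of one side of a bridge is the unit
potential between its two ends.
-/

section Potential

open scoped Matrix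

lemma exists_mulVec_eq_of_forall_vecMul_eq_zero {K m n : Type*} [Field K] [Fintype m] [Fintype n]
    (A : Matrix m n K) {b : m → K} (hb : ∀ g, g ᵥ* A = 0 → g ⬝ᵥ b = 0) : ∃ v, A *ᵥ v = b := by
  by_contra hmem
  obtain ⟨φ, hφb, hφA⟩ :=
    Submodule.exists_le_ker_of_notMem (p := LinearMap.range A.mulVecLin) (v := b) hmem
  obtain ⟨g, rfl⟩ := (dotProductEquiv K m).surjective φ
  refine hφb (hb g (dotProduct_eq_zero _ fun v => ?_))
  rw [← Matrix.dotProduct_mulVec]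
  exact hφA ⟨v, rfl⟩

variable [Fintype V] {G : SimpleGraph V} {x y z : V} {h g : V → ℝ}

lemma vecMul_lapMatrix (G : SimpleGraph V) (g : V → ℝ) :
    g ᵥ* G.lapMatrix ℝ = G.lapMatrix ℝ *ᵥ g := by
  rw [← Matrix.mulVec_transpose, (G.isSymm_lapMatrix ℝ).eq]

lemma energyFn_eq_dotProduct_mulVec (φ : V → ℝ) :
    energyFn G φ = φ ⬝ᵥ G.lapMatrix ℝ *ᵥ φ := by
  rw [← Matrix.toLinearMap₂'_apply', G.lapMatrix_toLinearMap₂' ℝ, energyFn]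
  ring

/-- `h` is the potential of a unit current entering the network `G` at `x` and leaving it
at `y`: Kirchhoff's laws hold at every vertex. -/
def IsUnitPotential (G : SimpleGraph V) (x y : V) (h : V → ℝ) : Prop :=
  G.lapMatrix ℝ *ᵥ h = Pi.single x 1 - Pi.single y 1

namespace IsUnitPotential

lemma add (hh : IsUnitPotential G x y h) (hg : IsUnitPotential G y z g) :
    IsUnitPotential G x z (h + g) := by
  rw [IsUnitPotential, Matrix.mulVec_add, hh, hg, sub_add_sub_cancel]

lemma dotProduct_mulVec (hh : IsUnitPotential G x y h) (φ : V → ℝ) :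
    φ ⬝ᵥ G.lapMatrix ℝ *ᵥ h = φ x - φ y := by
  rw [hh, dotProduct_sub, dotProduct_single_one, dotProduct_single_one]

lemma reciprocity {a b : V} (hh : IsUnitPotential G x y h) (hg : IsUnitPotential G a b g) :
    g x - g y = h a - h b := by
  rw [← hh.dotProduct_mulVec, ← hg.dotProduct_mulVec, Matrix.dotProduct_mulVec,
    vecMul_lapMatrix, dotProduct_comm]

lemma sub_pos (hh : IsUnitPotential G x y h) (hxy : x ≠ y) : 0 < h x - h y := by
  have hpsd := G.posSemidef_lapMatrix ℝ
  have hquad : star h ⬝ᵥ G.lapMatrix ℝ *ᵥ h = h x - h y := hh.dotProduct_mulVec h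
  refine lt_of_le_of_ne (hquad ▸ hpsd.dotProduct_mulVec_nonneg h) fun hzero => ?_
  have hlap := (hpsd.dotProduct_mulVec_zero_iff h).1 (hquad.trans hzero.symm)
  have := congrFun (hh.symm.trans hlap) x
  simp [hxy] at this

lemma energyFn_smul_add (hh : IsUnitPotential G x y h) (φ : V → ℝ) (t : ℝ) :
    energyFn G (φ + t • h) =
      energyFn G φ + 2 * t * (φ x - φ y) + t ^ 2 * (h x - h y) := by
  have hcross : h ⬝ᵥ G.lapMatrix ℝ *ᵥ φ = φ x - φ y := by
    rw [Matrix.dotProduct_mulVec, vecMul_lapMatrix, dotProduct_comm, hh.dotProduct_mulVec]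
  simp only [energyFn_eq_dotProduct_mulVec, Matrix.mulVec_add, Matrix.mulVec_smul, add_dotProduct,
    dotProduct_add, smul_dotProduct, dotProduct_smul, smul_eq_mul, hcross, hh.dotProduct_mulVec,
    Pi.add_apply, Pi.smul_apply]
  ring

lemma isLeast_energyFn (hh : IsUnitPotential G x y h) (hxy : x ≠ y) :
    IsLeast {e | ∃ φ : V → ℝ, φ x = 1 ∧ φ y = 0 ∧ e = energyFn G φ} (h x - h y)⁻¹ := by
  have hr := (hh.sub_pos hxy).ne'
  constructor
  · refine ⟨(fun _ => -h y / (h x - h y)) + (h x - h y)⁻¹ • h, ?_, ?_, ?_⟩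
    · simp only [Pi.add_apply, Pi.smul_apply, smul_eq_mul]
      field_simp
      ring
    · simp only [Pi.add_apply, Pi.smul_apply, smul_eq_mul]
      field_simp
      ring
    · rw [hh.energyFn_smul_add]
      simp only [energyFn, sub_self]
      field_simp
      simp
  · rintro _ ⟨φ, hφx, hφy, rfl⟩
    have hnonneg : 0 ≤ energyFn G (φ + (-(h x - h y)⁻¹) • h) := by
      rw [energyFn_eq_dotProduct_mulVec]
      exact (G.posSemidef_lapMatrix ℝ).dotProduct_mulVec_nonneg _
    rw [hh.energyFn_smul_add, hφx, hφy] at hnonneg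
    have hsq : (-(h x - h y)⁻¹) ^ 2 * (h x - h y) = (h x - h y)⁻¹ := by field_simp
    linarith

lemma eres_eq (hh : IsUnitPotential G x y h) : eres G x y = h x - h y := by
  rcases eq_or_ne x y with rfl | hxy
  · have hempty : {e | ∃ φ : V → ℝ, φ x = 1 ∧ φ x = 0 ∧ e = energyFn G φ} = ∅ :=
      Set.eq_empty_of_forall_notMem fun _ ⟨_, h1, h0, _⟩ => one_ne_zero (h1.symm.trans h0)
    rw [eres, hempty, Real.sInf_empty, inv_zero, sub_self]
  · rw [eres, (hh.isLeast_energyFn hxy).csInf_eq, inv_inv]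

end IsUnitPotential

lemma exists_isUnitPotential (hxy : G.Reachable x y) : ∃ h, IsUnitPotential G x y h := by
  refine exists_mulVec_eq_of_forall_vecMul_eq_zero _ fun g hg => ?_
  rw [vecMul_lapMatrix, G.lapMatrix_mulVec_eq_zero_iff_forall_reachable] at hg
  rw [dotProduct_sub, dotProduct_single_one, dotProduct_single_one, hg x y hxy, sub_self]

lemma isUnitPotential_indicator {S : Set V} {a b : V} (ha : a ∈ S) (hb : b ∉ S)
    (hS : ∀ u ∈ S, ∀ v ∉ S, (G.Adj u v ↔ u = a ∧ v = b)) :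
    IsUnitPotential G a b (S.indicator 1) := by
  ext w
  have hterm : ∀ v, (if G.Adj w v then S.indicator (1 : V → ℝ) w - S.indicator 1 v else 0) =
      (if v = b then (Pi.single a 1 : V → ℝ) w else 0) -
        if v = a then (Pi.single b 1 : V → ℝ) w else 0 := by
    intro v
    simp only [Set.indicator_apply, Pi.single_apply, Pi.one_apply]
    have := hS w
    have := hS v
    have := G.adj_comm v w
    grind
  calc (G.lapMatrix ℝ *ᵥ S.indicator 1) w
      = ∑ v, if G.Adj w v then S.indicator (1 : V → ℝ) w - S.indicator 1 v else 0 := by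
        rw [G.lapMatrix_mulVec_apply, ← card_neighborFinset_eq_degree, neighborFinset_eq_filter,
          ← Finset.sum_filter, Finset.sum_sub_distrib, Finset.sum_const, nsmul_eq_mul]
    _ = (Pi.single a 1 - Pi.single b 1 : V → ℝ) w := by
        simp [hterm, Finset.sum_sub_distrib]

lemma eres_eq_add_one_of_cut {S : Set V} {a b : V} (hx : x ∈ S) (ha : a ∈ S) (hb : b ∉ S)
    (hS : ∀ u ∈ S, ∀ v ∉ S, (G.Adj u v ↔ u = a ∧ v = b)) (hxa : G.Reachable x a) :
    eres G x b = eres G x a + 1 := by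
  obtain ⟨h, hh⟩ := exists_isUnitPotential hxa
  have hind := isUnitPotential_indicator ha hb hS
  have hrecip := hh.reciprocity hind
  rw [(hh.add hind).eres_eq, hh.eres_eq]
  simp only [Pi.add_apply, Set.indicator_of_mem hx, Set.indicator_of_mem ha,
    Set.indicator_of_notMem hb, Pi.one_apply] at hrecip ⊢
  linarith

end Potential

section FunctionalGraph

open Function

variable {p : V → V} {u x : V}

/-- The vertices whose forward `p`-orbit passes through `u`. When `p` points towards the cycle of
a unicyclic graph and `u` is off the cycle, this is the subtree hanging from `u`. -/
def branch (p : V → V) (u : V) : Set V := {a | ∃ m, p^[m] a = u}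

lemma self_mem_branch (p : V → V) (u : V) : u ∈ branch p u := ⟨0, rfl⟩

lemma mem_branch_of_apply (h : p x ∈ branch p u) : x ∈ branch p u := by
  obtain ⟨m, hm⟩ := h
  exact ⟨m + 1, hm⟩

lemma apply_mem_branch (h : x ∈ branch p u) (hxu : x ≠ u) : p x ∈ branch p u := by
  obtain ⟨_ | m, hm⟩ := h
  · exact absurd hm hxu
  · exact ⟨m, hm⟩

lemma apply_notMem_branch (hu : u ∉ periodicPts p) : p u ∉ branch p u :=
  fun ⟨m, hm⟩ => hu ⟨m + 1, m.succ_pos, hm⟩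

lemma sum_apply_sub_eq_sum_notMem_periodicPts [Fintype V] (p : V → V) (f : V → ℝ) :
    ∑ u, (f (p u) - f u) = ∑ u with u ∉ periodicPts p, (f (p u) - f u) := by
  have hperiodic : ∑ u with u ∈ periodicPts p, (f (p u) - f u) = 0 := by
    rw [Finset.sum_sub_distrib, sub_eq_zero]
    refine Finset.sum_nbij p ?_ ?_ ?_ fun _ _ => rfl
    · simpa [Set.MapsTo] using (bijOn_periodicPts p).mapsTo
    · simpa using (bijOn_periodicPts p).injOn
    · simpa using (bijOn_periodicPts p).surjOn
  rw [← Finset.sum_filter_add_sum_filter_not _ (· ∈ periodicPts p), hperiodic, zero_add]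

lemma card_notMem_periodicPts_and_mem_branch [Fintype V] {d : ℕ} (hd : p^[d] x ∈ periodicPts p)
    (hlt : ∀ m < d, p^[m] x ∉ periodicPts p) :
    #{u | u ∉ periodicPts p ∧ x ∈ branch p u} = d := by
  have himage : ({u | u ∉ periodicPts p ∧ x ∈ branch p u} : Finset V) =
      (Finset.range d).image (p^[·] x) := by
    ext u
    simp only [Finset.mem_filter_univ, Finset.mem_image, Finset.mem_range]
    constructor
    · rintro ⟨hu, m, rfl⟩
      refine ⟨m, not_le.1 fun hdm => hu ?_, rfl⟩
      obtain ⟨j, rfl⟩ := Nat.exists_eq_add_of_le' hdm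
      rw [iterate_add_apply]
      exact (bijOn_periodicPts p).mapsTo.iterate j hd
    · rintro ⟨m, hm, rfl⟩
      exact ⟨hlt m hm, m, rfl⟩
  have hne : ∀ i j, i < j → j < d → p^[i] x ≠ p^[j] x := by
    refine fun i j hij hjd heq => hlt i (hij.trans hjd) ⟨j - i, Nat.sub_pos_of_lt hij, ?_⟩
    rw [IsPeriodicPt, IsFixedPt, ← iterate_add_apply, Nat.sub_add_cancel hij.le, heq]
  rw [himage, Finset.card_image_of_injOn, Finset.card_range]
  intro i hi j hj hij
  by_contra hijne
  rw [Finset.mem_coe, Finset.mem_range] at hi hj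
  rcases lt_or_gt_of_ne hijne with h | h
  · exact hne i j h hj hij
  · exact hne j i h hi hij.symm

/-- `G` is the underlying graph of the functional digraph with arcs `u → p u`, and every edge
carries exactly one arc. -/
structure IsFunctionalGraph (G : SimpleGraph V) (p : V → V) : Prop where
  adj_iff : ∀ a b, G.Adj a b ↔ p a = b ∨ p b = a
  apply_apply_ne : ∀ u, p (p u) ≠ u

namespace IsFunctionalGraph

variable {G : SimpleGraph V}

lemma of_esize_le [Fintype V] (hadj : ∀ u, G.Adj u (p u)) (hne : ∀ u, p (p u) ≠ u)
    (hcard : esize G ≤ Fintype.card V) : IsFunctionalGraph G p := by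
  have harc : ∀ {u a b}, s(u, p u) = s(a, b) ↔ u = a ∧ p a = b ∨ u = b ∧ p b = a := by
    intro u a b
    rw [Sym2.eq_iff]
    grind
  let arc : V → G.edgeSet := fun u => ⟨s(u, p u), hadj u⟩
  have hinj : Injective arc := by
    intro u v huv
    rcases harc.1 (congrArg Subtype.val huv) with ⟨huv, -⟩ | ⟨hu, hv⟩
    · exact huv
    · exact absurd (hu ▸ hv) (hne v)
  have hbij : Bijective arc :=
    hinj.bijective_of_nat_card_le (hcard.trans_eq Nat.card_eq_fintype_card.symm)
  refine ⟨fun a b => ⟨fun hab => ?_, ?_⟩, hne⟩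
  · obtain ⟨u, hu⟩ := hbij.surjective ⟨s(a, b), hab⟩
    exact (harc.1 (congrArg Subtype.val hu)).imp And.right And.right
  · rintro (rfl | rfl)
    exacts [hadj a, (hadj b).symm]

lemma degR_eq [Fintype V] (h : IsFunctionalGraph G p) (y : V) :
    degR G y = ∑ w, ((if p y = w then 1 else 0) + if p w = y then 1 else 0) := by
  rw [degR, Finset.card_filter, Nat.cast_sum]
  refine Finset.sum_congr rfl fun w _ => ?_
  have := h.apply_apply_ne y
  rw [if_congr (h.adj_iff y w) rfl rfl, Nat.cast_ite, Nat.cast_one, Nat.cast_zero]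
  grind

lemma sum_degR_mul [Fintype V] (h : IsFunctionalGraph G p) (f : V → ℝ) :
    ∑ y, degR G y * f y = ∑ u, (f u + f (p u)) := by
  simp only [h.degR_eq, Finset.sum_mul, add_mul, Finset.sum_add_distrib]
  congr 1
  · simp
  · rw [Finset.sum_comm]
    simp

lemma adj_iff_of_mem_branch_of_notMem_branch (h : IsFunctionalGraph G p) (hu : u ∉ periodicPts p)
    {a b : V} (ha : a ∈ branch p u) (hb : b ∉ branch p u) : G.Adj a b ↔ a = u ∧ b = p u := by
  rw [h.adj_iff]
  constructor
  · rintro (rfl | rfl)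
    · have hau : a = u := by_contra fun hau => hb (apply_mem_branch ha hau)
      exact ⟨hau, congrArg p hau⟩
    · exact absurd (mem_branch_of_apply ha) hb
  · rintro ⟨rfl, rfl⟩
    exact Or.inl rfl

lemma eres_apply_sub_eres [Fintype V] (h : IsFunctionalGraph G p) (hconn : G.Connected) (x : V)
    (hu : u ∉ periodicPts p) :
    eres G x (p u) - eres G x u = if x ∈ branch p u then 1 else -1 := by
  have hcut : ∀ a ∈ branch p u, ∀ b ∉ branch p u, (G.Adj a b ↔ a = u ∧ b = p u) :=
    fun a ha b hb => h.adj_iff_of_mem_branch_of_notMem_branch hu ha hb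
  split_ifs with hx
  · rw [eres_eq_add_one_of_cut hx (self_mem_branch p u) (apply_notMem_branch hu) hcut
      (hconn x u)]
    ring
  · rw [eres_eq_add_one_of_cut (S := (branch p u)ᶜ) (a := p u) (b := u) hx
      (apply_notMem_branch hu) (not_not.2 (self_mem_branch p u))
      (fun a ha b hb => by rw [G.adj_comm, hcut b (not_not.1 hb) a ha, and_comm]) (hconn x (p u))]
    ring

theorem Rw_eq [Fintype V] (h : IsFunctionalGraph G p) (hconn : G.Connected) (x : V) :
    Rw G x = 2 * Rres G x + 2 * (#{u | u ∉ periodicPts p ∧ x ∈ branch p u} : ℝ) -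
      #{u | u ∉ periodicPts p} := by
  have hsum : Rw G x = 2 * Rres G x + ∑ u, (eres G x (p u) - eres G x u) := by
    rw [Rw, h.sum_degR_mul, Rres, Finset.sum_add_distrib, Finset.sum_sub_distrib]
    ring
  rw [hsum, sum_apply_sub_eq_sum_notMem_periodicPts, add_sub_assoc, add_right_inj]
  calc ∑ u with u ∉ periodicPts p, (eres G x (p u) - eres G x u)
      = ∑ u with u ∉ periodicPts p, (2 * (if x ∈ branch p u then (1 : ℝ) else 0) - 1) := by
        refine Finset.sum_congr rfl fun u hu => ?_
        rw [h.eres_apply_sub_eres hconn x (Finset.mem_filter.1 hu).2]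
        split_ifs <;> norm_num
    _ = 2 * (#{u | u ∉ periodicPts p ∧ x ∈ branch p u} : ℝ) - #{u | u ∉ periodicPts p} := by
        rw [Finset.sum_sub_distrib, ← Finset.mul_sum, Finset.sum_boole, Finset.filter_filter]
        simp

end IsFunctionalGraph

end FunctionalGraph

section DistToSet

variable [Fintype V] {G : SimpleGraph V} {s : Set V} {x y : V}

lemma distToSet_le_dist (x : V) (hy : y ∈ s) : distToSet G x s ≤ G.dist x y :=
  Nat.sInf_le ⟨y, hy, rfl⟩

lemma exists_dist_eq_distToSet (G : SimpleGraph V) (x : V) (hs : s.Nonempty) :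
    ∃ y ∈ s, G.dist x y = distToSet G x s :=
  Nat.sInf_mem (hs.image (G.dist x))

lemma distToSet_of_mem (hx : x ∈ s) : distToSet G x s = 0 :=
  Nat.le_zero.1 ((distToSet_le_dist x hx).trans_eq dist_self)

lemma distToSet_eq_zero_iff (hconn : G.Connected) (hs : s.Nonempty) :
    distToSet G x s = 0 ↔ x ∈ s := by
  refine ⟨fun h => ?_, distToSet_of_mem⟩
  obtain ⟨y, hy, hxy⟩ := exists_dist_eq_distToSet G x hs
  rwa [hconn.dist_eq_zero_iff.1 (hxy.trans h)]

lemma exists_adj_distToSet_eq_sub_one (hconn : G.Connected) (hs : s.Nonempty) (hx : x ∉ s) :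
    ∃ w, G.Adj x w ∧ distToSet G w s = distToSet G x s - 1 := by
  obtain ⟨y, hy, hxy⟩ := exists_dist_eq_distToSet G x hs
  obtain ⟨walk, hwalk⟩ := hconn.exists_walk_length_eq_dist x y
  obtain ⟨w, hxw, tail, rfl⟩ :=
    Walk.exists_eq_cons_of_ne (fun h : x = y => hx (h ▸ hy)) walk
  rw [Walk.length_cons] at hwalk
  have hupper := (distToSet_le_dist w hy).trans (dist_le tail)
  obtain ⟨z, hz, hwz⟩ := exists_dist_eq_distToSet G w hs
  have hlower : distToSet G x s ≤ distToSet G w s + 1 := by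
    have := hconn.dist_triangle (u := x) (v := w) (w := z)
    rw [dist_eq_one_iff_adj.2 hxw] at this
    have := distToSet_le_dist (G := G) x hz
    lia
  exact ⟨w, hxw, by lia⟩

end DistToSet

section CycleOrientation

open Function

variable {G : SimpleGraph V} {l : ℕ} {c : Fin l → V} {p : V → V}

lemma dist_iterate_le (hadj : ∀ u, G.Adj u (p u)) (m : ℕ) (u : V) : G.dist u (p^[m] u) ≤ m := by
  have hwalk : ∃ w : G.Walk u (p^[m] u), w.length = m := by
    induction m generalizing u with
    | zero => exact ⟨Walk.nil, rfl⟩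
    | succ m ih =>
      obtain ⟨w, hw⟩ := ih (p u)
      exact ⟨Walk.cons (hadj u) w, congrArg (· + 1) hw⟩
  obtain ⟨w, hw⟩ := hwalk
  exact (dist_le w).trans_eq hw

/-- The vertex at which the forward `p`-orbit of `u` enters the cycle `c`, that is, the `v_k` whose
branch tree contains `u` when `p` orients `G` towards `c`. -/
noncomputable def cycleRoot [Fintype V] (G : SimpleGraph V) (c : Fin l → V) (p : V → V) (u : V) :
    V :=
  p^[distToSet G u (Set.range c)] u

lemma cycleRoot_cycle [Fintype V] (G : SimpleGraph V) (p : V → V) (i : Fin l) :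
    cycleRoot G c p (c i) = c i := by
  rw [cycleRoot, distToSet_of_mem (Set.mem_range_self i), iterate_zero_apply]

variable [NeZero l]

/-- `p` moves every vertex of `G` along an edge: once around the closed walk `c` for the vertices
of `c`, and one step closer to `c` for all others. Truncated subtraction makes
`distToSet_apply` cover both kinds of vertices. -/
structure IsCycleOrientation [Fintype V] (G : SimpleGraph V) (c : Fin l → V) (p : V → V) :
    Prop where
  adj : ∀ u, G.Adj u (p u)
  apply_cycle : ∀ i, p (c i) = c (i + 1)
  distToSet_apply : ∀ u, distToSet G (p u) (Set.range c) = distToSet G u (Set.range c) - 1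

lemma exists_isCycleOrientation [Fintype V] (hconn : G.Connected) (hinj : Injective c)
    (hadj : ∀ i, G.Adj (c i) (c (i + 1))) : ∃ p, IsCycleOrientation G c p := by
  have hstep : ∀ u, ∃ w, G.Adj u w ∧ (∀ i, c i = u → w = c (i + 1)) ∧
      distToSet G w (Set.range c) = distToSet G u (Set.range c) - 1 := by
    intro u
    by_cases hu : u ∈ Set.range c
    · obtain ⟨i, rfl⟩ := hu
      refine ⟨c (i + 1), hadj i, fun j hj => by rw [hinj hj], ?_⟩
      rw [distToSet_of_mem (Set.mem_range_self i), distToSet_of_mem (Set.mem_range_self (i + 1))]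
    · obtain ⟨w, huw, hw⟩ := exists_adj_distToSet_eq_sub_one hconn (Set.range_nonempty c) hu
      exact ⟨w, huw, fun i hi => absurd ⟨i, hi⟩ hu, hw⟩
  choose p hadj hcycle hdist using hstep
  exact ⟨p, hadj, fun i => hcycle _ i rfl, hdist⟩

namespace IsCycleOrientation

variable [Fintype V]

lemma distToSet_iterate (h : IsCycleOrientation G c p) (m : ℕ) (u : V) :
    distToSet G (p^[m] u) (Set.range c) = distToSet G u (Set.range c) - m := by
  induction m with
  | zero => rfl
  | succ m ih => rw [iterate_succ_apply', h.distToSet_apply, ih, Nat.sub_sub]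

lemma periodicPts_eq (h : IsCycleOrientation G c p) (hconn : G.Connected) :
    periodicPts p = Set.range c := by
  refine Set.Subset.antisymm ?_ ?_
  · rintro u ⟨m, hm, hu⟩
    have := h.distToSet_iterate m u
    rw [hu.eq] at this
    exact (distToSet_eq_zero_iff hconn (Set.range_nonempty c)).1 (by lia)
  · rintro _ ⟨i, rfl⟩
    have hsemiconj : Semiconj c (· + 1) p := fun i => (h.apply_cycle i).symm
    exact hsemiconj.mapsTo_periodicPts ((add_left_injective 1).mem_periodicPts i)

lemma apply_apply_ne (h : IsCycleOrientation G c p) (hconn : G.Connected) (hinj : Injective c)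
    (hl : 3 ≤ l) (u : V) : p (p u) ≠ u := by
  intro hu
  have hperiodic : u ∈ periodicPts p := ⟨2, two_pos, hu⟩
  rw [h.periodicPts_eq hconn] at hperiodic
  obtain ⟨i, rfl⟩ := hperiodic
  rw [h.apply_cycle, h.apply_cycle] at hu
  have htwo : (1 + 1 : Fin l) = 0 := by simpa [add_assoc] using hinj hu
  have := congrArg Fin.val htwo
  rw [Fin.val_add, Fin.val_one', Fin.val_zero, Nat.mod_eq_of_lt (by lia : 1 < l),
    Nat.mod_eq_of_lt (by lia : 1 + 1 < l)] at this
  lia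

lemma isFunctionalGraph (h : IsCycleOrientation G c p) (hconn : G.Connected) (hinj : Injective c)
    (hl : 3 ≤ l) (hcard : esize G ≤ Fintype.card V) : IsFunctionalGraph G p :=
  .of_esize_le h.adj (h.apply_apply_ne hconn hinj hl) hcard

lemma cycleRoot_mem_range (h : IsCycleOrientation G c p) (hconn : G.Connected) (u : V) :
    cycleRoot G c p u ∈ Set.range c := by
  rw [← distToSet_eq_zero_iff hconn (Set.range_nonempty c), cycleRoot, h.distToSet_iterate,
    Nat.sub_self]

lemma dist_cycleRoot (h : IsCycleOrientation G c p) (hconn : G.Connected) (u : V) :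
    G.dist u (cycleRoot G c p u) = distToSet G u (Set.range c) :=
  le_antisymm (dist_iterate_le h.adj _ u) (distToSet_le_dist u (h.cycleRoot_mem_range hconn u))

lemma cycleRoot_apply (h : IsCycleOrientation G c p) (hconn : G.Connected) {u : V}
    (hu : s(u, p u) ∉ cycleEdges c) : cycleRoot G c p (p u) = cycleRoot G c p u := by
  have hpos : distToSet G u (Set.range c) ≠ 0 := by
    rw [Ne, distToSet_eq_zero_iff hconn (Set.range_nonempty c)]
    rintro ⟨i, rfl⟩
    exact hu ⟨i, by rw [h.apply_cycle]⟩
  rw [cycleRoot, ← iterate_succ_apply, h.distToSet_apply, Nat.succ_eq_add_one,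
    Nat.sub_add_cancel (Nat.one_le_iff_ne_zero.2 hpos), cycleRoot]

lemma cycleRoot_eq_of_reachable (h : IsCycleOrientation G c p) (hconn : G.Connected)
    (hG : IsFunctionalGraph G p) {a b : V}
    (hab : (G.deleteEdges (cycleEdges c)).Reachable a b) :
    cycleRoot G c p a = cycleRoot G c p b := by
  obtain ⟨walk⟩ := hab
  induction walk with
  | nil => rfl
  | cons hadj _ ih =>
    rw [← ih]
    obtain ⟨hadj, hcycle⟩ := deleteEdges_adj.1 hadj
    rcases (hG.adj_iff _ _).1 hadj with rfl | rfl
    · exact (h.cycleRoot_apply hconn hcycle).symm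
    · exact h.cycleRoot_apply hconn (Sym2.eq_swap ▸ hcycle)

lemma card_notMem_periodicPts (h : IsCycleOrientation G c p) (hconn : G.Connected)
    (hinj : Injective c) : (#{u | u ∉ periodicPts p} : ℝ) = Fintype.card V - l := by
  have hcompl : ({u | u ∉ periodicPts p} : Finset V) = (Finset.univ.image c)ᶜ := by
    ext u
    simp [h.periodicPts_eq hconn]
  have hle : l ≤ Fintype.card V := by simpa using Fintype.card_le_of_injective c hinj
  rw [hcompl, Finset.card_compl, Finset.card_image_of_injective _ hinj, Finset.card_fin,
    Nat.cast_sub hle]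

lemma card_branch_eq_dist_cycleRoot (h : IsCycleOrientation G c p) (hconn : G.Connected) (x : V) :
    #{u | u ∉ periodicPts p ∧ x ∈ branch p u} = G.dist x (cycleRoot G c p x) := by
  rw [h.dist_cycleRoot hconn]
  refine card_notMem_periodicPts_and_mem_branch ?_ fun m hm => ?_
  · rw [h.periodicPts_eq hconn]
    exact h.cycleRoot_mem_range hconn x
  · rw [h.periodicPts_eq hconn, ← distToSet_eq_zero_iff hconn (Set.range_nonempty c),
      h.distToSet_iterate]
    exact Nat.sub_ne_zero_of_lt hm

end IsCycleOrientation

end CycleOrientation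

/-- If `G = U(C_l; T_1,…,T_l)` is an `n`-vertex unicyclic graph
and `x ∈ V(T_k)`, then `R^w(x) = 2·R(x) + 2·d(x,v_k) − (n − l)`. -/
theorem Rw_formula [Fintype V] (G : SimpleGraph V) (n l : ℕ) [NeZero l]
    (hn : Fintype.card V = n) (hconn : G.Connected) (huni : esize G = n)
    (hl : 3 ≤ l) (c : Fin l → V) (hinj : Function.Injective c)
    (hadj : ∀ i : Fin l, G.Adj (c i) (c (i + 1)))
    (k : Fin l) (x : V) (hx : (G.deleteEdges (cycleEdges c)).Reachable (c k) x) :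
    Rw G x = 2 * Rres G x + 2 * (G.dist x (c k) : ℝ) - ((n : ℝ) - l) := by
  subst hn
  obtain ⟨p, hp⟩ := exists_isCycleOrientation hconn hinj hadj
  have hG : IsFunctionalGraph G p := hp.isFunctionalGraph hconn hinj hl huni.le
  have hroot : cycleRoot G c p x = c k := by
    rw [← hp.cycleRoot_eq_of_reachable hconn hG hx, cycleRoot_cycle]
  rw [hG.Rw_eq hconn x, hp.card_branch_eq_dist_cycleRoot hconn x, hroot,
    hp.card_notMem_periodicPts hconn hinj]
end
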